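/- Let F be a field of characteristic zero and k ≥ 2. For all n ≥ 1 and 0 ≤ r ≤ n, the dimension of V_{r,n−r} equals 1 if r = n, equals k² − 1 if r = n − 1, and equals k² if 0 ≤ r ≤ n − 2. -/

import Mathlib

/-- The linear map `M_k(F) → M_k(F)`, `x ↦ (tr(x)/k)·I_k`. -/
noncomputable def traceUnitLM (F : Type*) [Field F] (k : ℕ) :
    Matrix (Fin k) (Fin k) F →ₗ[F] Matrix (Fin k) (Fin k) F :=
  LinearMap.smulRight (Matrix.traceLinearMap (Fin k) F F)
    ((k : F)⁻¹ • (1 : Matrix (Fin k) (Fin k) F))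

/-- The linear map `M_k(F) → M_k(F)`, `x ↦ x_{12}·b` ((1,2) entry of `x` times `b`). -/
noncomputable def entry12LM (F : Type*) [Field F] (k : ℕ) (hk : 2 ≤ k)
    (b : Matrix (Fin k) (Fin k) F) :
    Matrix (Fin k) (Fin k) F →ₗ[F] Matrix (Fin k) (Fin k) F :=
  LinearMap.smulRight
    { toFun := fun x => x ⟨0, by omega⟩ ⟨1, by omega⟩
      map_add' := fun x y => rfl
      map_smul' := fun c x => rfl } b

/-- The space `V_{r,n−r}`: the subspace of multilinear maps `M_k(F)^n → M_k(F)` spanned by the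
maps `(x_1, …, x_n) ↦ v_1·v_2⋯v_n` where, for some `σ ∈ S_n` and traceless matrices
`b_1, …, b_n ∈ sl_k(F)`, the `l`-th factor is `v_l = (tr(x_{σ(l)})/k)·I_k` if `σ(l) ≤ r`
(0-indexed: `σ(l) < r`) and `v_l = (x_{σ(l)})_{12}·b_l` otherwise. -/
noncomputable def Vspace (F : Type*) [Field F] (k : ℕ) (hk : 2 ≤ k) (n r : ℕ) :
    Submodule F (MultilinearMap F (fun _ : Fin n => Matrix (Fin k) (Fin k) F)
      (Matrix (Fin k) (Fin k) F)) :=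
  Submodule.span F
    {g | ∃ (σ : Equiv.Perm (Fin n)) (b : Fin n → Matrix (Fin k) (Fin k) F),
        (∀ l, (b l).trace = 0) ∧
        g = MultilinearMap.domDomCongr σ
          ((MultilinearMap.mkPiAlgebraFin F n (Matrix (Fin k) (Fin k) F)).compLinearMap
            fun l => if ((σ l : ℕ) < r) then traceUnitLM F k else entry12LM F k hk (b l))}

namespace DimV

variable {F : Type*} [Field F]

/-- The scalar functionals: normalized trace for indices below `r`, the (1,2) entry otherwise. -/
noncomputable def phi (F : Type*) [Field F] (k : ℕ) (hk : 2 ≤ k) (r : ℕ) (i : ℕ) :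
    Matrix (Fin k) (Fin k) F →ₗ[F] F :=
  if i < r then (k : F)⁻¹ • Matrix.traceLinearMap (Fin k) F F
  else { toFun := fun x => x ⟨0, by omega⟩ ⟨1, by omega⟩
         map_add' := fun x y => rfl
         map_smul' := fun c x => rfl }

/-- The map sending `B` to `x ↦ (∏ phi_i(x_i)) • B`. -/
noncomputable def Phi (F : Type*) [Field F] (k : ℕ) (hk : 2 ≤ k) (n r : ℕ) :
    Matrix (Fin k) (Fin k) F →ₗ[F]
    MultilinearMap F (fun _ : Fin n => Matrix (Fin k) (Fin k) F) (Matrix (Fin k) (Fin k) F) where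
  toFun B := ((MultilinearMap.mkPiAlgebra F (Fin n) F).compLinearMap
    fun i => phi F k hk r i).smulRight B
  map_add' x y := by refine MultilinearMap.ext fun z => ?_; simp
  map_smul' c x := by refine MultilinearMap.ext fun z => ?_; simp [smul_smul, mul_comm]

lemma Phi_apply (k : ℕ) (hk : 2 ≤ k) (n r : ℕ) (B : Matrix (Fin k) (Fin k) F)
    (x : Fin n → Matrix (Fin k) (Fin k) F) :
    Phi F k hk n r B x = (∏ i : Fin n, phi F k hk r i (x i)) • B := by
  simp [Phi]

lemma Phi_injective [CharZero F] (k : ℕ) (hk : 2 ≤ k) (n r : ℕ) :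
    Function.Injective (Phi F k hk n r) := by
  intro A B h
  have h2 := congrArg (fun f => f (fun i : Fin n => if (i : ℕ) < r then 1
    else Matrix.single ⟨0, by omega⟩ ⟨1, by omega⟩ 1)) h
  simp only [Phi_apply] at h2
  have hk0 : (k : F) ≠ 0 := by
    have : k ≠ 0 := by omega
    exact_mod_cast this
  rw [Finset.prod_eq_one] at h2
  · simpa using h2
  · intro i _
    by_cases hi : (i : ℕ) < r
    · simp [phi, hi, hk0]
    · simp only [phi, hi, if_false]
      exact Matrix.single_apply_same _ _ _

lemma prod_smul_ofFn {A : Type*} [Ring A] [Algebra F A] : ∀ (n : ℕ) (s : Fin n → F) (c : Fin n → A),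
    (List.ofFn fun l => s l • c l).prod = (∏ l, s l) • (List.ofFn c).prod
  | 0, s, c => by simp
  | n + 1, s, c => by
    rw [List.ofFn_succ, List.ofFn_succ, List.prod_cons, List.prod_cons, Fin.prod_univ_succ,
      prod_smul_ofFn n (fun l => s l.succ) (fun l => c l.succ), smul_mul_smul_comm]

lemma prod_single_ofFn {A : Type*} [Monoid A] (B : A) : ∀ (n : ℕ) (j : Fin n),
    (List.ofFn fun l => if l = j then B else 1).prod = B
  | 0, j => j.elim0
  | n + 1, j => by
    rw [List.ofFn_succ, List.prod_cons]
    refine Fin.cases ?_ (fun j => ?_) j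
    · simp [Fin.succ_ne_zero]
    · have := prod_single_ofFn B n j
      simp [Fin.succ_inj, this, (Fin.succ_ne_zero j).symm]

lemma prod_mul_fix {A : Type*} [Monoid A] (X : A) (L : List A) (h : ∀ d ∈ L, d * X = X) :
    L.prod * X = X := by
  induction L with
  | nil => simp
  | cons a L ih =>
    rw [List.prod_cons, mul_assoc, ih (fun d hd => h d (List.mem_cons_of_mem _ hd))]
    exact h a List.mem_cons_self

/-- The set of matrix products. -/
def prods (F : Type*) [Field F] (k n r : ℕ) : Set (Matrix (Fin k) (Fin k) F) :=
  {B | ∃ (σ : Equiv.Perm (Fin n)) (b : Fin n → Matrix (Fin k) (Fin k) F),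
    (∀ l, (b l).trace = 0) ∧
    B = (List.ofFn fun l => if ((σ l : ℕ) < r) then 1 else b l).prod}

lemma gen_eq (k : ℕ) (hk : 2 ≤ k) (n r : ℕ) (σ : Equiv.Perm (Fin n))
    (b : Fin n → Matrix (Fin k) (Fin k) F) :
    MultilinearMap.domDomCongr σ
          ((MultilinearMap.mkPiAlgebraFin F n (Matrix (Fin k) (Fin k) F)).compLinearMap
            fun l => if ((σ l : ℕ) < r) then traceUnitLM F k else entry12LM F k hk (b l)) =
    Phi F k hk n r (List.ofFn fun l => if ((σ l : ℕ) < r) then 1 else b l).prod := by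
  refine MultilinearMap.ext fun x => ?_
  rw [Phi_apply, ← Equiv.prod_comp σ, ← prod_smul_ofFn]
  rw [MultilinearMap.domDomCongr_apply, MultilinearMap.compLinearMap_apply,
    MultilinearMap.mkPiAlgebraFin_apply]
  congr 2
  funext l
  by_cases h : (σ l : ℕ) < r
  · simp [h, phi, traceUnitLM, smul_smul, mul_comm]
  · simp [h, phi, entry12LM]

lemma Vspace_eq (k : ℕ) (hk : 2 ≤ k) (n r : ℕ) :
    Vspace F k hk n r = (Submodule.span F (prods F k n r)).map (Phi F k hk n r) := by
  rw [Submodule.map_span, Vspace]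
  congr 1
  ext g
  constructor
  · rintro ⟨σ, b, hb, rfl⟩
    exact ⟨_, ⟨σ, b, hb, rfl⟩, (gen_eq k hk n r σ b).symm⟩
  · rintro ⟨_, ⟨σ, b, hb, rfl⟩, rfl⟩
    exact ⟨σ, b, hb, (gen_eq k hk n r σ b).symm⟩

lemma finrank_eq [CharZero F] (k : ℕ) (hk : 2 ≤ k) (n r : ℕ) :
    Module.finrank F (Vspace F k hk n r) = Module.finrank F (Submodule.span F (prods F k n r)) := by
  rw [Vspace_eq]
  exact (Submodule.equivMapOfInjective _ (Phi_injective k hk n r) _).finrank_eq.symm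

lemma span_top_case (k n : ℕ) : Submodule.span F (prods F k n n) = Submodule.span F {1} := by
  congr 1
  ext B
  constructor
  · rintro ⟨σ, b, hb, rfl⟩
    simp
  · rintro rfl
    exact ⟨1, fun _ => 0, by simp, by simp⟩

lemma span_pred_case (k r : ℕ) : Submodule.span F (prods F k (r + 1) r) =
    LinearMap.ker (Matrix.traceLinearMap (Fin k) F F) := by
  have key : ∀ (σ : Equiv.Perm (Fin (r + 1))) (b : Fin (r + 1) → Matrix (Fin k) (Fin k) F),
      (List.ofFn fun l => if ((σ l : ℕ) < r) then 1 else b l).prod = b (σ.symm (Fin.last r)) := by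
    intro σ b
    rw [← prod_single_ofFn (b (σ.symm (Fin.last r))) (r + 1) (σ.symm (Fin.last r))]
    congr 2
    funext l
    by_cases h : l = σ.symm (Fin.last r)
    · subst h; simp
    · have h1 : σ l ≠ Fin.last r := fun h2 => h (by rw [← h2]; simp)
      have h2 : (σ l : ℕ) < r := Fin.val_lt_last h1
      simp [h, h2]
  apply le_antisymm
  · rw [Submodule.span_le]
    rintro _ ⟨σ, b, hb, rfl⟩
    rw [key]
    simpa using hb _
  · intro B hB
    apply Submodule.subset_span
    refine ⟨1, fun _ => B, fun _ => by simpa using hB, ?_⟩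
    rw [key]

lemma finrank_ker (k : ℕ) (hk : 2 ≤ k) :
    Module.finrank F (LinearMap.ker (Matrix.traceLinearMap (Fin k) F F)) = k ^ 2 - 1 := by
  have h := LinearMap.finrank_range_add_finrank_ker (Matrix.traceLinearMap (Fin k) F F)
  have hs : LinearMap.range (Matrix.traceLinearMap (Fin k) F F) = ⊤ := by
    rw [LinearMap.range_eq_top]
    intro c
    exact ⟨Matrix.single ⟨0, by omega⟩ ⟨0, by omega⟩ c, by simp⟩
  rw [hs, finrank_top, Module.finrank_self, Module.finrank_matrix] at h
  simp only [Fintype.card_fin, Module.finrank_self] at h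
  rw [pow_two]
  omega

lemma single_fact (k : ℕ) (hk : 2 ≤ k) (i j : Fin k) :
    ∃ H A B : Matrix (Fin k) (Fin k) F, H.trace = 0 ∧ A.trace = 0 ∧ B.trace = 0 ∧
      A * B = Matrix.single i j 1 ∧ H * Matrix.single i j 1 = Matrix.single i j 1 := by
  have : Nontrivial (Fin k) := Fin.nontrivial_iff_two_le.mpr hk
  obtain ⟨m, hm⟩ := exists_ne i
  have hH : (Matrix.single i i (1 : F) - Matrix.single m m 1).trace = 0 := by
    simp [Matrix.trace_sub]
  have hHX : ∀ j, (Matrix.single i i (1 : F) - Matrix.single m m 1) * Matrix.single i j 1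
      = Matrix.single i j 1 := by
    intro j
    rw [sub_mul, Matrix.single_mul_single_same, Matrix.single_mul_single_of_ne _ _ _ _ hm]
    simp
  by_cases hij : i = j
  · subst hij
    refine ⟨_, Matrix.single i m 1, Matrix.single m i 1, hH, ?_, ?_, ?_, hHX i⟩
    · exact Matrix.trace_single_eq_of_ne _ _ _ hm.symm
    · exact Matrix.trace_single_eq_of_ne _ _ _ hm
    · simp
  · exact ⟨_, _, Matrix.single i j 1, hH, hH, Matrix.trace_single_eq_of_ne _ _ _ hij,
      hHX j, hHX j⟩

lemma span_big_case (k : ℕ) (hk : 2 ≤ k) (p r : ℕ) (hr : r ≤ p) :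
    Submodule.span F (prods F k (p + 2) r) = ⊤ := by
  have key : ∀ i j : Fin k, Matrix.single i j (1 : F) ∈ prods F k (p + 2) r := by
    intro i j
    obtain ⟨H, A, B, hH, hA, hB, hAB, hHX⟩ := single_fact (F := F) k hk i j
    refine ⟨1, fun l => if (l : ℕ) < p then H else if (l : ℕ) = p then A else B, ?_, ?_⟩
    · intro l
      dsimp only
      split_ifs <;> assumption
    · rw [List.ofFn_succ', List.concat_eq_append, List.ofFn_succ', List.concat_eq_append]
      rw [List.prod_append, List.prod_append]
      have h1 : ¬ p < r := by omega
      have h2 : ¬ p + 1 < r := by omega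
      simp only [List.prod_singleton, mul_assoc]
      simp [h1, h2, hAB]
      symm
      apply prod_mul_fix
      intro d hd
      rw [List.mem_ofFn] at hd
      obtain ⟨l, rfl⟩ := hd
      split_ifs <;> simp [hHX]
  rw [eq_top_iff]
  intro M _
  rw [Matrix.matrix_eq_sum_single M]
  refine Submodule.sum_mem _ fun i _ => Submodule.sum_mem _ fun j _ => ?_
  have : Matrix.single i j (M i j) = M i j • Matrix.single i j (1 : F) := by simp
  rw [this]
  exact Submodule.smul_mem _ _ (Submodule.subset_span (key i j))

end DimV

/-- Let `F` be a field of characteristic zero and `k ≥ 2`.  For all `n ≥ 1`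
and `0 ≤ r ≤ n`, the dimension of `V_{r,n−r}` equals `1` if `r = n`, equals `k² − 1` if
`r = n − 1`, and equals `k²` if `0 ≤ r ≤ n − 2`. -/
theorem dim_Vspace (F : Type*) [Field F] [CharZero F] (k : ℕ) (hk : 2 ≤ k)
    (n r : ℕ) (hn : 1 ≤ n) (hr : r ≤ n) :
    (r = n → Module.finrank F (Vspace F k hk n r) = 1) ∧
    (r + 1 = n → Module.finrank F (Vspace F k hk n r) = k ^ 2 - 1) ∧
    (r + 2 ≤ n → Module.finrank F (Vspace F k hk n r) = k ^ 2) := by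
  refine ⟨?_, ?_, ?_⟩
  · rintro rfl
    rw [DimV.finrank_eq, DimV.span_top_case]
    have : Nonempty (Fin k) := ⟨⟨0, by omega⟩⟩
    exact finrank_span_singleton one_ne_zero
  · rintro rfl
    rw [DimV.finrank_eq, DimV.span_pred_case, DimV.finrank_ker k hk]
  · intro h
    obtain ⟨p, rfl⟩ : ∃ p, n = p + 2 := ⟨n - 2, by omega⟩
    rw [DimV.finrank_eq, DimV.span_big_case k hk p r (by omega), finrank_top,
      Module.finrank_matrix]
    simp [pow_two]
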